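/- Let Ω ⊂ ℝ² be bounded and smooth, 0 ≤ ρ ≤ R̄ a.e., and u ∈ H₀¹(Ω;ℝ²). Then there exists C = C(R̄, Ω) such that ‖√ρ u‖²_{L⁴} ≤ C (1 + ‖√ρ u‖_{L²}) ‖∇u‖_{L²} √(log(2 + ‖∇u‖²_{L²})). -/

import Mathlib

open Set MeasureTheory

/-- Partial derivative of a scalar field in the `i`-th coordinate direction. -/
noncomputable def pd (v : (Fin 2 → ℝ) → ℝ) (i : Fin 2) (x : Fin 2 → ℝ) : ℝ :=
  fderiv ℝ v x (Pi.single i 1)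


theorem cs_weighted (α β : ℝ) (hab : α < β) (f k : ℝ → ℝ) (hf : ContinuousOn f (Icc α β))
    (hk : ContinuousOn k (Icc α β)) (hpos : ∀ s ∈ Icc α β, 0 < k s) :
    (∫ s in α..β, f s) ^ 2 ≤ (∫ s in α..β, k s) * ∫ s in α..β, f s ^ 2 / k s := by
  have hu : uIcc α β = Icc α β := uIcc_of_le hab.le
  have hfi : IntervalIntegrable f volume α β := ContinuousOn.intervalIntegrable (by rwa [hu])
  have hki : IntervalIntegrable k volume α β := ContinuousOn.intervalIntegrable (by rwa [hu])
  have hq : IntervalIntegrable (fun s => f s ^ 2 / k s) volume α β :=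
    ContinuousOn.intervalIntegrable (by
      rw [hu]; exact (hf.pow 2).div hk (fun s hs => (hpos s hs).ne'))
  have hK : 0 < ∫ s in α..β, k s :=
    intervalIntegral.intervalIntegral_pos_of_pos_on hki
      (fun s hs => hpos s ⟨hs.1.le, hs.2.le⟩) hab
  set K := ∫ s in α..β, k s
  set I := ∫ s in α..β, f s
  set Q := ∫ s in α..β, f s ^ 2 / k s
  have key : ∫ s in α..β, (2 * (I / K) * f s - (I / K) ^ 2 * k s) ≤ Q := by
    apply intervalIntegral.integral_mono_on hab.le
    · exact (hfi.const_mul _).sub (hki.const_mul _)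
    · exact hq
    · intro s hs
      have h := hpos s hs
      rw [le_div_iff₀ h]
      nlinarith [sq_nonneg (f s - I / K * k s)]
  rw [intervalIntegral.integral_sub (hfi.const_mul _) (hki.const_mul _),
    intervalIntegral.integral_const_mul, intervalIntegral.integral_const_mul] at key
  change 2 * (I / K) * I - (I / K) ^ 2 * K ≤ Q at key
  have : 2 * (I / K) * I - (I / K) ^ 2 * K = I ^ 2 / K := by field_simp; ring
  rw [this, div_le_iff₀ hK] at key
  linarith

theorem fderiv_path (v : (Fin 2 → ℝ) → ℝ) (y : Fin 2 → ℝ) (t : ℝ) :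
    fderiv ℝ v y ![1, t] = pd v 0 y + t * pd v 1 y := by
  have : (![1, t] : Fin 2 → ℝ) = Pi.single 0 1 + t • Pi.single 1 1 := by
    ext i; fin_cases i <;> simp
  rw [this, map_add, map_smul]; rfl

theorem fderiv_path_sq (v : (Fin 2 → ℝ) → ℝ) (y : Fin 2 → ℝ) (t : ℝ) (ht : t ∈ Icc (0:ℝ) 1) :
    (fderiv ℝ v y ![1, t]) ^ 2 ≤ 2 * ∑ i, pd v i y ^ 2 := by
  rw [fderiv_path, Fin.sum_univ_two]
  have h2 : t ^ 2 ≤ 1 := by nlinarith [ht.1, ht.2]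
  nlinarith [sq_nonneg (pd v 0 y - t * pd v 1 y), mul_nonneg (sub_nonneg.2 h2) (sq_nonneg (pd v 1 y))]

theorem pd_cont (v : (Fin 2 → ℝ) → ℝ) (hv : ContDiff ℝ 1 v) (i : Fin 2) : Continuous (pd v i) := by
  unfold pd
  exact (hv.continuous_fderiv (by norm_num)).clm_apply continuous_const

theorem path_ftc (v : (Fin 2 → ℝ) → ℝ) (hv : ContDiff ℝ 1 v) (x : Fin 2 → ℝ) (t α β : ℝ) :
    ∫ s in α..β, fderiv ℝ v (x + s • ![1, t]) ![1, t]
      = v (x + β • ![1, t]) - v (x + α • ![1, t]) := by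
  have hc : Continuous (fun s : ℝ => fderiv ℝ v (x + s • ![1, t]) ![1, t]) :=
    ((hv.continuous_fderiv (by norm_num)).comp (by fun_prop)).clm_apply continuous_const
  apply intervalIntegral.integral_eq_sub_of_hasDerivAt (f := fun s : ℝ => v (x + s • ![1, t]))
  · intro s _
    have h1 : HasDerivAt (fun s : ℝ => x + s • (![1, t] : Fin 2 → ℝ)) ![1, t] s := by
      simpa using ((hasDerivAt_id s).smul_const (![1, t] : Fin 2 → ℝ)).const_add x
    exact ((hv.differentiable (by norm_num)) _).hasFDerivAt.comp_hasDerivAt s h1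
  · exact hc.intervalIntegrable _ _

/-- weighted path estimate -/
theorem path_est (v : (Fin 2 → ℝ) → ℝ) (hv : ContDiff ℝ 1 v) (x : Fin 2 → ℝ) (t α β : ℝ)
    (ht : t ∈ Icc (0:ℝ) 1) (hab : α < β) (k : ℝ → ℝ)
    (hk : ContinuousOn k (Icc α β)) (hpos : ∀ s ∈ Icc α β, 0 < k s) :
    ENNReal.ofReal ((v (x + β • ![1, t]) - v (x + α • ![1, t])) ^ 2)
      ≤ ENNReal.ofReal (2 * ∫ s in α..β, k s) *
        ∫⁻ s in Ioc α β, ENNReal.ofReal ((∑ i, pd v i (x + s • ![1, t]) ^ 2) / k s) := by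
  have hc : Continuous (fun s : ℝ => fderiv ℝ v (x + s • ![1, t]) ![1, t]) :=
    ((hv.continuous_fderiv (by norm_num)).comp (by fun_prop)).clm_apply continuous_const
  have hg : Continuous (fun s : ℝ => ∑ i, pd v i (x + s • ![1, t]) ^ 2) := by
    refine continuous_finsetSum _ fun i _ => ?_
    exact ((pd_cont v hv i).comp (by fun_prop)).pow 2
  have hu : uIcc α β = Icc α β := uIcc_of_le hab.le
  have hgk : ContinuousOn (fun s : ℝ => (∑ i, pd v i (x + s • ![1, t]) ^ 2) / k s) (Icc α β) :=
    hg.continuousOn.div hk (fun s hs => (hpos s hs).ne')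
  have hgi : IntervalIntegrable (fun s : ℝ => (∑ i, pd v i (x + s • ![1, t]) ^ 2) / k s)
      volume α β := ContinuousOn.intervalIntegrable (by rwa [hu])
  have h1 := cs_weighted α β hab _ k hc.continuousOn hk hpos
  rw [path_ftc v hv] at h1
  have hK : 0 ≤ ∫ s in α..β, k s :=
    intervalIntegral.integral_nonneg hab.le (fun s hs => (hpos s hs).le)
  have h2 : ∫ s in α..β, (fderiv ℝ v (x + s • ![1, t]) ![1, t]) ^ 2 / k s
      ≤ ∫ s in α..β, 2 * ((∑ i, pd v i (x + s • ![1, t]) ^ 2) / k s) := by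
    apply intervalIntegral.integral_mono_on hab.le
    · apply ContinuousOn.intervalIntegrable
      rw [hu]; exact (hc.continuousOn.pow 2).div hk (fun s hs => (hpos s hs).ne')
    · exact hgi.const_mul 2
    · intro s hs
      rw [← mul_div_assoc]
      exact div_le_div_of_nonneg_right (fderiv_path_sq v _ t ht) (hpos s hs).le
  rw [intervalIntegral.integral_const_mul] at h2
  have h3 : ∫⁻ s in Ioc α β, ENNReal.ofReal ((∑ i, pd v i (x + s • ![1, t]) ^ 2) / k s)
      = ENNReal.ofReal (∫ s in α..β, (∑ i, pd v i (x + s • ![1, t]) ^ 2) / k s) := by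
    rw [intervalIntegral.integral_of_le hab.le, ofReal_integral_eq_lintegral_ofReal]
    · exact hgi.1
    · refine (ae_restrict_iff' measurableSet_Ioc).2 (Filter.Eventually.of_forall fun s hs => ?_)
      exact div_nonneg (Finset.sum_nonneg fun i _ => sq_nonneg _) (hpos s ⟨hs.1.le, hs.2⟩).le
  rw [h3, ← ENNReal.ofReal_mul (by positivity)]
  apply ENNReal.ofReal_le_ofReal
  calc _ ≤ _ := h1
    _ ≤ _ := mul_le_mul_of_nonneg_left h2 hK
    _ = _ := by ring

/-- 1D scaling -/
theorem lintegral_scale (f : ℝ → ENNReal) (hf : Measurable f) (s c : ℝ) (hs : 0 < s) :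
    ∫⁻ t, ENNReal.ofReal s * f (c + s * t) = ∫⁻ t, f t := by
  have h1 : ∫⁻ t, f t = ∫⁻ t, f (c + t) := (lintegral_add_left_eq_self f c).symm
  rw [h1]
  conv_rhs => rw [← Real.smul_map_volume_mul_left hs.ne']
  rw [lintegral_smul_measure, lintegral_map (by fun_prop) (by fun_prop), abs_of_pos hs,
    lintegral_const_mul _ (by fun_prop), smul_eq_mul]

theorem lintegral_two (f : (Fin 2 → ℝ) → ENNReal) (hf : Measurable f) :
    ∫⁻ y, f y = ∫⁻ a, ∫⁻ b, f ![a, b] := by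
  have h := (volume_preserving_finTwoArrow ℝ).symm.lintegral_comp_emb
    (MeasurableEquiv.measurableEmbedding _) f
  rw [← h, Measure.volume_eq_prod, lintegral_prod]
  · rfl
  · exact (hf.comp (MeasurableEquiv.measurable _)).aemeasurable

theorem sector (g : (Fin 2 → ℝ) → ENNReal) (hg : Measurable g) (x : Fin 2 → ℝ) (α β : ℝ)
    (hα : 0 < α) :
    ∫⁻ t in Icc (0:ℝ) 1, ∫⁻ s in Ioc α β, ENNReal.ofReal s * g (x + s • ![1, t]) ≤ ∫⁻ y, g y := by
  have hvec : Measurable (fun p : ℝ × ℝ => (![p.1, p.2] : Fin 2 → ℝ)) := by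
    apply Continuous.measurable
    refine continuous_pi fun i => ?_
    fin_cases i <;> simp <;> fun_prop
  have hm : Measurable (fun p : ℝ × ℝ => ENNReal.ofReal p.2 * g (x + p.2 • ![1, p.1])) := by
    refine Measurable.mul (by fun_prop) (hg.comp ?_)
    refine Measurable.const_add ?_ _
    exact Measurable.smul measurable_snd (hvec.comp (measurable_const.prodMk measurable_fst))
  rw [lintegral_lintegral_swap hm.aemeasurable, lintegral_two g hg]
  have h1 : ∫⁻ a, ∫⁻ b, g ![a, b] = ∫⁻ a, ∫⁻ b, g ![x 0 + a, b] :=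
    (lintegral_add_left_eq_self (fun a => ∫⁻ b, g ![a, b]) (x 0)).symm
  rw [h1]
  refine le_trans ?_ (setLIntegral_le_lintegral (Ioc α β) _)
  refine setLIntegral_mono' measurableSet_Ioc fun s hs => ?_
  have hs0 : 0 < s := hα.trans hs.1
  rw [← lintegral_scale (fun b => g ![x 0 + s, b])
    (hg.comp (hvec.comp (measurable_const.prodMk measurable_id))) s (x 1) hs0]
  refine (setLIntegral_le_lintegral _ _).trans (le_of_eq ?_)
  congr 1; ext t; congr 2
  ext i; fin_cases i <;> simp

theorem b_bound (v : (Fin 2 → ℝ) → ℝ) (hv : ContDiff ℝ 1 v) (x : Fin 2 → ℝ) (δ D : ℝ)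
    (hδ : 0 < δ) (hD : δ < D) (h0 : ∀ t : ℝ, v (x + D • ![1, t]) = 0) :
    ∫⁻ t in Icc (0:ℝ) 1, ENNReal.ofReal (v (x + δ • ![1, t]) ^ 2)
      ≤ ENNReal.ofReal (2 * Real.log (D / δ)) * ∫⁻ y, ENNReal.ofReal (∑ i, pd v i y ^ 2) := by
  have hgm : Measurable (fun y => ENNReal.ofReal (∑ i, pd v i y ^ 2)) := by
    apply Measurable.ennreal_ofReal
    apply Continuous.measurable
    exact continuous_finsetSum _ fun i _ => (pd_cont v hv i).pow 2
  refine le_trans ?_ (mul_le_mul_right (sector _ hgm x δ D hδ) _)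
  rw [← lintegral_const_mul' _ _ ENNReal.ofReal_ne_top]
  refine setLIntegral_mono' measurableSet_Icc fun t ht => ?_
  have h := path_est v hv x t δ D ht hD (fun s => s⁻¹)
    (continuousOn_inv₀.mono fun s hs => (hδ.trans_le hs.1).ne')
    (fun s hs => inv_pos.2 (hδ.trans_le hs.1))
  rw [h0, zero_sub, neg_sq, integral_inv_of_pos hδ (hδ.trans hD)] at h
  refine h.trans (mul_le_mul_right (le_of_eq ?_) _)
  refine setLIntegral_congr_fun measurableSet_Ioc fun s hs => ?_
  have hs0 : 0 < s := hδ.trans hs.1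
  simp only [div_inv_eq_mul]
  rw [mul_comm, ENNReal.ofReal_mul hs0.le]

theorem e_bound (v : (Fin 2 → ℝ) → ℝ) (hv : ContDiff ℝ 1 v) (δ : ℝ) (hδ : 0 < δ) :
    ∫⁻ x, ∫⁻ t in Icc (0:ℝ) 1, ENNReal.ofReal ((v (x + δ • ![1, t]) - v x) ^ 2)
      ≤ ENNReal.ofReal (2 * δ ^ 2) * ∫⁻ y, ENNReal.ofReal (∑ i, pd v i y ^ 2) := by
  have hgm : Measurable (fun y => ENNReal.ofReal (∑ i, pd v i y ^ 2)) := by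
    apply Measurable.ennreal_ofReal
    apply Continuous.measurable
    exact continuous_finsetSum _ fun i _ => (pd_cont v hv i).pow 2
  have hvc := hv.continuous
  have hm : Measurable (fun p : (Fin 2 → ℝ) × ℝ =>
      ENNReal.ofReal ((v (p.1 + δ • ![1, p.2]) - v p.1) ^ 2)) := by
    apply Measurable.ennreal_ofReal
    apply Continuous.measurable
    have : Continuous (fun p : (Fin 2 → ℝ) × ℝ => p.1 + δ • (![1, p.2] : Fin 2 → ℝ)) := by
      refine continuous_pi fun i => ?_
      fin_cases i <;> simp <;> fun_prop
    exact ((hvc.comp this).sub (hvc.comp continuous_fst)).pow 2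
  rw [lintegral_lintegral_swap hm.aemeasurable]
  set Gl := ∫⁻ y, ENNReal.ofReal (∑ i, pd v i y ^ 2) with hGl
  have h1 : ∀ t ∈ Icc (0:ℝ) 1, ∫⁻ x, ENNReal.ofReal ((v (x + δ • ![1, t]) - v x) ^ 2)
      ≤ ENNReal.ofReal (2 * δ ^ 2) * Gl := by
    intro t ht
    calc ∫⁻ x, ENNReal.ofReal ((v (x + δ • ![1, t]) - v x) ^ 2)
        ≤ ∫⁻ x, ENNReal.ofReal (2 * δ) *
          ∫⁻ s in Ioc 0 δ, ENNReal.ofReal (∑ i, pd v i (x + s • ![1, t]) ^ 2) := by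
          refine lintegral_mono fun x => ?_
          have h := path_est v hv x t 0 δ ht hδ (fun _ => 1) continuousOn_const
            (fun _ _ => one_pos)
          simpa using h
      _ = ENNReal.ofReal (2 * δ) *
          ∫⁻ s in Ioc 0 δ, ∫⁻ x, ENNReal.ofReal (∑ i, pd v i (x + s • ![1, t]) ^ 2) := by
          rw [lintegral_const_mul' _ _ ENNReal.ofReal_ne_top, lintegral_lintegral_swap]
          apply Measurable.aemeasurable
          exact hgm.comp (f := fun p : (Fin 2 → ℝ) × ℝ => p.1 + p.2 • (![1, t] : Fin 2 → ℝ))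
            (Continuous.measurable (by fun_prop))
      _ = ENNReal.ofReal (2 * δ) * ∫⁻ s in Ioc 0 δ, Gl := by
          congr 1
          refine lintegral_congr fun s => ?_
          exact lintegral_add_right_eq_self (fun y => ENNReal.ofReal (∑ i, pd v i y ^ 2)) _
      _ = ENNReal.ofReal (2 * δ ^ 2) * Gl := by
          rw [setLIntegral_const, Real.volume_Ioc, sub_zero, mul_comm Gl, ← mul_assoc,
            ← ENNReal.ofReal_mul (by positivity)]
          congr 2; ring
  calc _ ≤ ∫⁻ t in Icc (0:ℝ) 1, ENNReal.ofReal (2 * δ ^ 2) * Gl :=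
        setLIntegral_mono' measurableSet_Icc h1
    _ = _ := by simp

theorem norm_fderiv_sq (v : (Fin 2 → ℝ) → ℝ) (x : Fin 2 → ℝ) :
    ‖fderiv ℝ v x‖ ^ 2 ≤ 2 * ∑ i, pd v i x ^ 2 := by
  have h : ‖fderiv ℝ v x‖ ≤ |pd v 0 x| + |pd v 1 x| := by
    refine ContinuousLinearMap.opNorm_le_bound _ (by positivity) fun y => ?_
    have hy : y = y 0 • Pi.single 0 1 + y 1 • Pi.single 1 1 := by
      ext i; fin_cases i <;> simp
    have h2 : fderiv ℝ v x y = y 0 * pd v 0 x + y 1 * pd v 1 x := by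
      conv_lhs => rw [hy]
      rw [map_add, map_smul, map_smul]; rfl
    rw [h2, Real.norm_eq_abs]
    have h0 : |y 0| ≤ ‖y‖ := norm_le_pi_norm y 0
    have h1 : |y 1| ≤ ‖y‖ := norm_le_pi_norm y 1
    calc _ ≤ |y 0| * |pd v 0 x| + |y 1| * |pd v 1 x| := by
          rw [← abs_mul, ← abs_mul]; exact abs_add_le _ _
      _ ≤ ‖y‖ * |pd v 0 x| + ‖y‖ * |pd v 1 x| := by gcongr
      _ = _ := by ring
  rw [Fin.sum_univ_two, ← sq_abs (pd v 0 x), ← sq_abs (pd v 1 x)]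
  have := pow_le_pow_left₀ (norm_nonneg _) h 2
  nlinarith [sq_nonneg (|pd v 0 x| - |pd v 1 x|)]

theorem L6_bound (Ω : Set (Fin 2 → ℝ)) (hb : Bornology.IsBounded Ω) :
    ∃ C : NNReal, ∀ v : (Fin 2 → ℝ) → ℝ, ContDiff ℝ 1 v → tsupport v ⊆ Ω →
      ∫⁻ x, ENNReal.ofReal (v x ^ 6) ≤ C * (∫⁻ y, ENNReal.ofReal (∑ i, pd v i y ^ 2)) ^ 3 := by
  have hV : volume Ω ≠ ⊤ := hb.measure_lt_top.ne
  set K := eLpNormLESNormFDerivOfLeConst ℝ (volume : Measure (Fin 2 → ℝ)) Ω (3/2) 6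
  set V : NNReal := ((volume Ω) ^ (1 / (3/2 : ℝ) - 1 / 2 : ℝ)).toNNReal
  refine ⟨(K * V) ^ 6 * 8, fun v hv hs => ?_⟩
  have h1 : eLpNorm v (6 : NNReal) volume ≤ K * eLpNorm (fderiv ℝ v) (3/2 : NNReal) volume := by
    apply eLpNorm_le_eLpNorm_fderiv_of_le volume hv ((subset_tsupport v).trans hs) _ _ _ hb
    · rw [← NNReal.coe_le_coe]; push_cast; norm_num
    · rw [← NNReal.coe_lt_coe]; simp; norm_num
    · simp; norm_num
  have hsf : Function.support (fderiv ℝ v) ⊆ Ω := (support_fderiv_subset ℝ).trans hs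
  have h2 : eLpNorm (fderiv ℝ v) (3/2 : NNReal) volume
      ≤ eLpNorm (fderiv ℝ v) (2 : NNReal) volume * V := by
    have hr : ∀ p : ENNReal, eLpNorm (fderiv ℝ v) p (volume.restrict Ω)
        = eLpNorm (fderiv ℝ v) p volume := fun p =>
      eLpNorm_restrict_eq_of_support_subset (f := fderiv ℝ v) (by exact hsf)
    rw [← hr, ← hr]
    have hpq : ((3/2 : NNReal) : ENNReal) ≤ ((2 : NNReal) : ENNReal) := by
      rw [ENNReal.coe_le_coe, ← NNReal.coe_le_coe]; push_cast; norm_num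
    have h := eLpNorm_le_eLpNorm_mul_rpow_measure_univ (μ := volume.restrict Ω) hpq
      ((hv.continuous_fderiv (by norm_num)).aestronglyMeasurable)
    refine h.trans (le_of_eq ?_)
    congr 1
    rw [ENNReal.coe_toNNReal]
    · simp
    · apply ENNReal.rpow_ne_top_of_nonneg (by norm_num) hV
  have h3 : ∫⁻ x, ENNReal.ofReal (v x ^ 6) = eLpNorm v (6 : NNReal) volume ^ 6 := by
    have := eLpNorm_nnreal_pow_eq_lintegral (f := v) (μ := volume) (p := 6) (by norm_num)
    have e : (((6 : NNReal) : ℝ)) = ((6 : ℕ) : ℝ) := by norm_num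
    rw [e, ENNReal.rpow_natCast] at this
    rw [this]
    refine lintegral_congr fun x => ?_
    rw [ENNReal.rpow_natCast, ← ofReal_norm, ← ENNReal.ofReal_pow (norm_nonneg _),
      Real.norm_eq_abs, Even.pow_abs (by decide)]
  have h4 : eLpNorm (fderiv ℝ v) (2 : NNReal) volume ^ 2
      ≤ 2 * ∫⁻ y, ENNReal.ofReal (∑ i, pd v i y ^ 2) := by
    have := eLpNorm_nnreal_pow_eq_lintegral (f := fderiv ℝ v) (μ := volume) (p := 2) (by norm_num)
    have e : (((2 : NNReal) : ℝ)) = ((2 : ℕ) : ℝ) := by norm_num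
    rw [e, ENNReal.rpow_natCast] at this
    rw [this, ← lintegral_const_mul' _ _ (by norm_num)]
    refine lintegral_mono fun x => ?_
    rw [ENNReal.rpow_natCast, ← ofReal_norm, ← ENNReal.ofReal_pow (norm_nonneg _)]
    refine (ENNReal.ofReal_le_ofReal (norm_fderiv_sq v x)).trans (le_of_eq ?_)
    rw [ENNReal.ofReal_mul (by norm_num)]; simp
  rw [h3]
  set N := eLpNorm (fderiv ℝ v) (2 : NNReal) volume
  calc _ ≤ ((K : ENNReal) * (N * V)) ^ 6 := by
        gcongr; exact h1.trans (by gcongr)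
    _ = ((K : ENNReal) * V) ^ 6 * (N ^ 2) ^ 3 := by ring
    _ ≤ ((K : ENNReal) * V) ^ 6 * (2 * ∫⁻ y, ENNReal.ofReal (∑ i, pd v i y ^ 2)) ^ 3 := by gcongr
    _ = _ := by push_cast; ring

theorem g_lintegral (Ω : Set (Fin 2 → ℝ)) (v : (Fin 2 → ℝ) → ℝ) (hv : ContDiff ℝ 1 v)
    (hc : HasCompactSupport v) (hs : tsupport v ⊆ Ω) :
    Integrable (fun y => ∑ i, pd v i y ^ 2) ∧
    ∫⁻ y, ENNReal.ofReal (∑ i, pd v i y ^ 2)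
      = ENNReal.ofReal (∫ y in Ω, ∑ i, pd v i y ^ 2) := by
  have hz : ∀ y, y ∉ tsupport v → ∑ i, pd v i y ^ 2 = 0 := by
    intro y hy
    have : fderiv ℝ v y = 0 := by
      by_contra h
      exact hy (support_fderiv_subset ℝ h)
    simp [pd, this]
  have hcont : Continuous (fun y => ∑ i, pd v i y ^ 2) :=
    continuous_finsetSum _ fun i _ => (pd_cont v hv i).pow 2
  have hi : Integrable (fun y => ∑ i, pd v i y ^ 2) :=
    hcont.integrable_of_hasCompactSupport (HasCompactSupport.intro hc hz)
  refine ⟨hi, ?_⟩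
  rw [setIntegral_eq_integral_of_forall_compl_eq_zero (fun y hy => hz y fun h => hy (hs h)),
    ofReal_integral_eq_lintegral_ofReal hi
      (Filter.Eventually.of_forall fun y => Finset.sum_nonneg fun i _ => sq_nonneg _)]

theorem path_cont (δ : ℝ) :
    Continuous (fun p : (Fin 2 → ℝ) × ℝ => p.1 + δ • (![1, p.2] : Fin 2 → ℝ)) := by
  refine continuous_pi fun i => ?_
  fin_cases i <;> simp <;> fun_prop

/-- Pointwise decomposition at scale δ. -/
theorem pointwise (v : (Fin 2 → ℝ) → ℝ) (hv : ContDiff ℝ 1 v) (x : Fin 2 → ℝ) (δ D Gv : ℝ)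
    (hδ : 0 < δ) (hD : δ < D) (h0 : ∀ t : ℝ, v (x + D • ![1, t]) = 0) (hGv : 0 ≤ Gv)
    (hG : ∫⁻ y, ENNReal.ofReal (∑ i, pd v i y ^ 2) = ENNReal.ofReal Gv) :
    v x ^ 2 ≤ 2 * (2 * Real.log (D / δ) * Gv)
        + 2 * ∫ t in (0:ℝ)..1, (v (x + δ • ![1, t]) - v x) ^ 2 ∧
    (∫ t in (0:ℝ)..1, (v (x + δ • ![1, t]) - v x) ^ 2)
      ≤ 2 * v x ^ 2 + 2 * (2 * Real.log (D / δ) * Gv) := by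
  have hlog : 0 ≤ Real.log (D / δ) := Real.log_nonneg (by rw [le_div_iff₀ hδ]; linarith)
  have hw : Continuous (fun t : ℝ => v (x + δ • ![1, t])) :=
    hv.continuous.comp ((path_cont δ).comp (by fun_prop : Continuous fun t : ℝ => (x, t)))
  have hb : ∫ t in (0:ℝ)..1, v (x + δ • ![1, t]) ^ 2 ≤ 2 * Real.log (D / δ) * Gv := by
    have h := b_bound v hv x δ D hδ hD h0
    rw [hG, ← ENNReal.ofReal_mul (by positivity), ← ofReal_integral_eq_lintegral_ofReal,
      ENNReal.ofReal_le_ofReal_iff (by positivity), integral_Icc_eq_integral_Ioc,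
      ← intervalIntegral.integral_of_le zero_le_one] at h
    · exact h
    · exact (hw.pow 2).continuousOn.integrableOn_Icc
    · exact Filter.Eventually.of_forall fun t => sq_nonneg _
  have i1 : IntervalIntegrable (fun t : ℝ => v (x + δ • ![1, t]) ^ 2) volume 0 1 :=
    (hw.pow 2).intervalIntegrable _ _
  have i2 : IntervalIntegrable (fun t : ℝ => (v (x + δ • ![1, t]) - v x) ^ 2) volume 0 1 :=
    ((hw.sub continuous_const).pow 2).intervalIntegrable _ _
  have i3 : IntervalIntegrable (fun _ : ℝ => v x ^ 2) volume 0 1 :=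
    continuous_const.intervalIntegrable _ _
  constructor
  · have : ∫ t in (0:ℝ)..1, v x ^ 2 ≤ ∫ t in (0:ℝ)..1, (2 * v (x + δ • ![1, t]) ^ 2
        + 2 * (v (x + δ • ![1, t]) - v x) ^ 2) := by
      refine intervalIntegral.integral_mono_on zero_le_one i3
        ((i1.const_mul 2).add (i2.const_mul 2)) fun t _ => ?_
      nlinarith [sq_nonneg (v (x + δ • ![1, t]) + (v (x + δ • ![1, t]) - v x))]
    rw [intervalIntegral.integral_add (i1.const_mul 2) (i2.const_mul 2),
      intervalIntegral.integral_const_mul, intervalIntegral.integral_const_mul] at this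
    simp only [intervalIntegral.integral_const, sub_zero, one_smul] at this
    linarith
  · have : ∫ t in (0:ℝ)..1, (v (x + δ • ![1, t]) - v x) ^ 2
        ≤ ∫ t in (0:ℝ)..1, (2 * v x ^ 2 + 2 * v (x + δ • ![1, t]) ^ 2) := by
      refine intervalIntegral.integral_mono_on zero_le_one i2
        ((i3.const_mul 2).add (i1.const_mul 2)) fun t _ => ?_
      nlinarith [sq_nonneg (v (x + δ • ![1, t]) + v x)]
    rw [intervalIntegral.integral_add (i3.const_mul 2) (i1.const_mul 2),
      intervalIntegral.integral_const_mul, intervalIntegral.integral_const_mul] at this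
    simp only [intervalIntegral.integral_const, sub_zero, one_smul] at this
    linarith

theorem e_integral (Ω : Set (Fin 2 → ℝ)) (hb : Bornology.IsBounded Ω)
    (v : (Fin 2 → ℝ) → ℝ) (hv : ContDiff ℝ 1 v) (δ Gv : ℝ) (hδ : 0 < δ) (hGv : 0 ≤ Gv)
    (hG : ∫⁻ y, ENNReal.ofReal (∑ i, pd v i y ^ 2) = ENNReal.ofReal Gv) :
    IntegrableOn (fun x => ∫ t in (0:ℝ)..1, (v (x + δ • ![1, t]) - v x) ^ 2) Ω ∧
    ∫ x in Ω, (∫ t in (0:ℝ)..1, (v (x + δ • ![1, t]) - v x) ^ 2) ≤ 2 * δ ^ 2 * Gv := by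
  have hq : Continuous (fun p : (Fin 2 → ℝ) × ℝ => (v (p.1 + δ • ![1, p.2]) - v p.1) ^ 2) :=
    ((hv.continuous.comp (path_cont δ)).sub (hv.continuous.comp continuous_fst)).pow 2
  have hec : Continuous (fun x => ∫ t in (0:ℝ)..1, (v (x + δ • ![1, t]) - v x) ^ 2) :=
    intervalIntegral.continuous_parametric_intervalIntegral_of_continuous'
      (f := fun x t => (v (x + δ • ![1, t]) - v x) ^ 2) hq 0 1
  have hi : IntegrableOn (fun x => ∫ t in (0:ℝ)..1, (v (x + δ • ![1, t]) - v x) ^ 2) Ω :=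
    (hec.continuousOn.integrableOn_compact hb.isCompact_closure).mono_set subset_closure
  refine ⟨hi, ?_⟩
  rw [← ENNReal.ofReal_le_ofReal_iff (by positivity), ofReal_integral_eq_lintegral_ofReal hi,
    ENNReal.ofReal_mul (by positivity), ← hG]
  · refine le_trans (setLIntegral_le_lintegral _ _) (le_trans (le_of_eq ?_) (e_bound v hv δ hδ))
    refine lintegral_congr fun x => ?_
    rw [intervalIntegral.integral_of_le zero_le_one, ← integral_Icc_eq_integral_Ioc,
      ofReal_integral_eq_lintegral_ofReal]
    · have : Continuous (fun t : ℝ => (v (x + δ • ![1, t]) - v x) ^ 2) :=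
        hq.comp (by fun_prop : Continuous fun t : ℝ => (x, t))
      exact this.continuousOn.integrableOn_Icc
    · exact Filter.Eventually.of_forall fun t => sq_nonneg _
  · exact Filter.Eventually.of_forall fun x =>
      intervalIntegral.integral_nonneg zero_le_one fun t _ => sq_nonneg _

theorem pw_alg (ρ a e M lam R : ℝ) (h0 : 0 ≤ ρ) (hR : ρ ≤ R) (ha : 0 ≤ a) (he : 0 ≤ e)
    (hM : 0 ≤ M) (hl : 0 < lam) (h1 : a ≤ 2 * M + 2 * e) (h2 : e ≤ 2 * a + 2 * M) :
    ρ ^ 2 * a ^ 2 ≤ 2 * R * M * (ρ * a) + R ^ 2 * (lam * e + lam⁻¹ * (4 * a ^ 3 + 2 * M ^ 3)) := by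
  have hR0 : 0 ≤ R := h0.trans hR
  have k1 : M * a ^ 2 ≤ a ^ 3 + M ^ 3 := by
    rcases le_total M a with h | h
    · nlinarith [mul_nonneg (sq_nonneg a) (sub_nonneg.2 h), pow_nonneg hM 3]
    · have : a ^ 2 ≤ M ^ 2 := pow_le_pow_left₀ ha h 2
      nlinarith [mul_nonneg hM (sub_nonneg.2 this), pow_nonneg ha 3]
  have k2 : a ^ 2 * e ≤ 4 * a ^ 3 + 2 * M ^ 3 := by
    nlinarith [mul_le_mul_of_nonneg_left h2 (sq_nonneg a)]
  have k3 : 2 * (a * e) ≤ lam * e + lam⁻¹ * (a ^ 2 * e) := by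
    have : lam * e + lam⁻¹ * (a ^ 2 * e) - 2 * (a * e) = lam⁻¹ * e * (lam - a) ^ 2 := by
      field_simp; ring
    have : 0 ≤ lam⁻¹ * e * (lam - a) ^ 2 := by positivity
    linarith
  have k4 : 2 * (a * e) ≤ lam * e + lam⁻¹ * (4 * a ^ 3 + 2 * M ^ 3) :=
    k3.trans (by gcongr)
  have k5 : ρ ^ 2 * a ^ 2 ≤ ρ ^ 2 * a * (2 * M + 2 * e) := by
    have := mul_le_mul_of_nonneg_left h1 (by positivity : 0 ≤ ρ ^ 2 * a)
    nlinarith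
  have k6 : ρ ^ 2 * a * (2 * M) ≤ 2 * R * M * (ρ * a) := by
    have := mul_le_mul_of_nonneg_right hR (by positivity : 0 ≤ 2 * M * (ρ * a))
    nlinarith
  have k7 : ρ ^ 2 * (2 * (a * e)) ≤ R ^ 2 * (lam * e + lam⁻¹ * (4 * a ^ 3 + 2 * M ^ 3)) := by
    gcongr
  nlinarith

theorem final_alg (R A G L K C6 V : ℝ) (hR : 0 ≤ R) (hA : 0 ≤ A) (hG : 0 ≤ G) (hL : 1 / 2 ≤ L)
    (hL2 : L ≤ 2 + G) (hK : 0 ≤ K) (hC : 0 ≤ C6) (hV : 0 ≤ V) :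
    2 * R * (K * G * L) * A + R ^ 2 * ((2 + G) ^ 6 * (2 * (((2 + G) ^ 3)⁻¹) ^ 2 * G)
      + ((2 + G) ^ 6)⁻¹ * (4 * (C6 * G ^ 3) + 2 * (K * G * L) ^ 3 * V))
      ≤ (1 + 2 * R * K + 2 * R ^ 2 * (2 + 4 * C6 + 2 * K ^ 3 * V)) * (1 + A) * G * L := by
  have hp : 0 < 2 + G := by linarith
  have hL0 : 0 ≤ L := by linarith
  have e1 : (2 + G) ^ 6 * (2 * (((2 + G) ^ 3)⁻¹) ^ 2 * G) = 2 * G := by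
    field_simp
  have e2 : ((2 + G) ^ 6)⁻¹ * G ^ 3 ≤ G := by
    rw [inv_mul_le_iff₀ (by positivity)]
    have : G ^ 2 ≤ (2 + G) ^ 6 := by
      calc G ^ 2 ≤ (2 + G) ^ 2 := by gcongr; linarith
        _ ≤ (2 + G) ^ 6 := pow_le_pow_right₀ (by linarith) (by norm_num)
    nlinarith [mul_le_mul_of_nonneg_right this hG]
  have e3 : ((2 + G) ^ 6)⁻¹ * (G ^ 3 * L ^ 3) ≤ G := by
    rw [inv_mul_le_iff₀ (by positivity)]
    have : G ^ 2 * L ^ 3 ≤ (2 + G) ^ 6 := by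
      calc G ^ 2 * L ^ 3 ≤ (2 + G) ^ 2 * (2 + G) ^ 3 := by gcongr; linarith
        _ = (2 + G) ^ 5 := by ring
        _ ≤ (2 + G) ^ 6 := pow_le_pow_right₀ (by linarith) (by norm_num)
    nlinarith [mul_le_mul_of_nonneg_right this hG]
  have e4 : ((2 + G) ^ 6)⁻¹ * (4 * (C6 * G ^ 3) + 2 * (K * G * L) ^ 3 * V)
      ≤ (4 * C6 + 2 * K ^ 3 * V) * G := by
    calc _ = 4 * C6 * (((2 + G) ^ 6)⁻¹ * G ^ 3)
          + 2 * K ^ 3 * V * (((2 + G) ^ 6)⁻¹ * (G ^ 3 * L ^ 3)) := by ring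
      _ ≤ 4 * C6 * G + 2 * K ^ 3 * V * G := by gcongr
      _ = _ := by ring
  rw [e1]
  have hGL : G ≤ 2 * (G * L) := by nlinarith
  set S := 2 + 4 * C6 + 2 * K ^ 3 * V with hS
  have hS0 : 0 ≤ S := by positivity
  have hQ : 0 ≤ G * L := by positivity
  calc _ ≤ 2 * R * (K * G * L) * A + R ^ 2 * (2 * G + (4 * C6 + 2 * K ^ 3 * V) * G) := by gcongr
    _ = 2 * R * K * A * (G * L) + R ^ 2 * S * G := by rw [hS]; ring
    _ ≤ 2 * R * K * A * (G * L) + R ^ 2 * S * (2 * (G * L)) := by gcongr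
    _ ≤ _ := by
      have t1 : 0 ≤ A * (G * L) := by positivity
      have t2 : 0 ≤ R * K * (G * L) := by positivity
      have t3 : 0 ≤ R ^ 2 * S * (A * (G * L)) := by positivity
      nlinarith

theorem scalar_est (Ω : Set (Fin 2 → ℝ)) (hopen : IsOpen Ω) (hb : Bornology.IsBounded Ω)
    (R : ℝ) (hR : 0 ≤ R) :
    ∃ C > 0, ∀ (ρ : (Fin 2 → ℝ) → ℝ) (v : (Fin 2 → ℝ) → ℝ),
      Measurable ρ → (∀ x ∈ Ω, 0 ≤ ρ x ∧ ρ x ≤ R) →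
      ContDiff ℝ 1 v → HasCompactSupport v → tsupport v ⊆ Ω →
      ∀ G, (∫ x in Ω, ∑ i, pd v i x ^ 2) ≤ G →
      IntegrableOn (fun x => ρ x * v x ^ 2) Ω ∧ IntegrableOn (fun x => ρ x ^ 2 * v x ^ 4) Ω ∧
      ∫ x in Ω, ρ x ^ 2 * v x ^ 4
        ≤ C * (1 + ∫ x in Ω, ρ x * v x ^ 2) * G * Real.log (2 + G) := by
  obtain ⟨C6, hC6⟩ := L6_bound Ω hb
  obtain ⟨B, hB0, hB⟩ : ∃ B : ℝ, 0 ≤ B ∧ ∀ x ∈ Ω, ‖x‖ ≤ B := by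
    obtain ⟨B, hB⟩ := hb.exists_norm_le
    exact ⟨max B 0, le_max_right _ _, fun x hx => (hB x hx).trans (le_max_left _ _)⟩
  set D := 2 * B + 2 with hD
  have hlogD : 0 ≤ Real.log D := Real.log_nonneg (by linarith)
  set K := 2 * (2 * Real.log D + 3) with hK
  have hK0 : 0 ≤ K := by positivity
  set V := (volume Ω).toReal with hV
  have hV0 : 0 ≤ V := ENNReal.toReal_nonneg
  refine ⟨1 + 2 * R * K + 2 * R ^ 2 * (2 + 4 * C6 + 2 * K ^ 3 * V), by positivity,
    fun ρ v hρ hρb hv hc hs G hG => ?_⟩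
  have hΩm := hopen.measurableSet
  obtain ⟨-, hGl⟩ := g_lintegral Ω v hv hc hs
  set Gv := ∫ x in Ω, ∑ i, pd v i x ^ 2 with hGvdef
  have hGv : 0 ≤ Gv := setIntegral_nonneg hΩm fun x _ => Finset.sum_nonneg fun i _ => sq_nonneg _
  have hG0 : 0 ≤ G := hGv.trans hG
  set L := Real.log (2 + G) with hLdef
  have hL : 1 / 2 ≤ L := by
    have h1 : Real.log 2 ≤ L := Real.log_le_log (by norm_num) (by linarith)
    have := Real.log_two_gt_d9
    linarith
  have hL2 : L ≤ 2 + G := by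
    have := Real.log_le_sub_one_of_pos (by linarith : 0 < 2 + G)
    linarith
  have hvc := hv.continuous
  -- integrability
  have hint : ∀ f : (Fin 2 → ℝ) → ℝ, Continuous f → IntegrableOn f Ω := fun f hf =>
    (hf.continuousOn.integrableOn_compact hb.isCompact_closure).mono_set subset_closure
  have hi1 : IntegrableOn (fun x => ρ x * v x ^ 2) Ω := by
    refine Integrable.mono' (hint (fun x => R * v x ^ 2) (by fun_prop))
      (hρ.mul (hvc.pow 2).measurable).aestronglyMeasurable ?_
    refine (ae_restrict_iff' hΩm).2 (Filter.Eventually.of_forall fun x hx => ?_)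
    obtain ⟨h0, h1⟩ := hρb x hx
    rw [Real.norm_eq_abs, abs_of_nonneg (by positivity)]
    gcongr
  have hi2 : IntegrableOn (fun x => ρ x ^ 2 * v x ^ 4) Ω := by
    refine Integrable.mono' (hint (fun x => R ^ 2 * v x ^ 4) (by fun_prop))
      ((hρ.pow_const 2).mul (hvc.pow 4).measurable).aestronglyMeasurable ?_
    refine (ae_restrict_iff' hΩm).2 (Filter.Eventually.of_forall fun x hx => ?_)
    obtain ⟨h0, h1⟩ := hρb x hx
    rw [Real.norm_eq_abs, abs_of_nonneg (by positivity)]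
    gcongr
  refine ⟨hi1, hi2, ?_⟩
  set A := ∫ x in Ω, ρ x * v x ^ 2 with hAdef
  have hA : 0 ≤ A := setIntegral_nonneg hΩm fun x hx => mul_nonneg (hρb x hx).1 (sq_nonneg _)
  have hp : 0 < 2 + G := by linarith
  set δ := ((2 + G) ^ 3)⁻¹ with hδdef
  have hδ : 0 < δ := by positivity
  have hδ1 : δ ≤ 1 := inv_le_one_of_one_le₀ (one_le_pow₀ (by linarith))
  have hδD : δ < D := by linarith
  have hlog : Real.log (D / δ) = Real.log D + 3 * L := by
    rw [hδdef, div_inv_eq_mul, Real.log_mul (by linarith) (by positivity), Real.log_pow]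
    norm_num [hLdef]
  set M := K * G * L with hMdef
  have hM : 0 ≤ M := by positivity
  have hM0 : 2 * Real.log (D / δ) * Gv ≤ M := by
    rw [hlog, hMdef, hK]
    have h1 : Real.log D + 3 * L ≤ (2 * Real.log D + 3) * L := by nlinarith
    calc 2 * (Real.log D + 3 * L) * Gv ≤ 2 * ((2 * Real.log D + 3) * L) * G := by gcongr
      _ = _ := by ring
  have hv0 : ∀ x ∈ Ω, ∀ t : ℝ, v (x + D • ![1, t]) = 0 := by
    intro x hx t
    apply image_eq_zero_of_notMem_tsupport
    intro h
    have h1 := (norm_le_pi_norm _ 0).trans (hB _ (hs h))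
    have h2 := (norm_le_pi_norm x 0).trans (hB x hx)
    simp only [Pi.add_apply, Pi.smul_apply, Matrix.cons_val_zero, smul_eq_mul, mul_one,
      Real.norm_eq_abs] at h1 h2
    have := (abs_le.1 h1).2
    have := (abs_le.1 h2).1
    linarith
  obtain ⟨hei, hee⟩ := e_integral Ω hb v hv δ Gv hδ hGv hGl
  set e : (Fin 2 → ℝ) → ℝ := fun x => ∫ t in (0:ℝ)..1, (v (x + δ • ![1, t]) - v x) ^ 2 with hedef
  have he0 : ∀ x, 0 ≤ e x := fun x =>
    intervalIntegral.integral_nonneg zero_le_one fun t _ => sq_nonneg _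
  have h6 : ∫ x in Ω, v x ^ 6 ≤ C6 * G ^ 3 := by
    have h := hC6 v hv hs
    have h' : ENNReal.ofReal (∫ x in Ω, v x ^ 6) ≤ ENNReal.ofReal (C6 * Gv ^ 3) := by
      rw [ofReal_integral_eq_lintegral_ofReal (hint _ (by fun_prop))
        (Filter.Eventually.of_forall fun x => by positivity)]
      refine (setLIntegral_le_lintegral _ _).trans (h.trans (le_of_eq ?_))
      rw [hGl, ENNReal.ofReal_mul (by positivity), ENNReal.ofReal_pow hGv]
      simp
    rw [ENNReal.ofReal_le_ofReal_iff (by positivity)] at h'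
    exact h'.trans (by gcongr)
  have hi6 : IntegrableOn (fun x => v x ^ 6) Ω := hint _ (by fun_prop)
  have hci : IntegrableOn (fun _ : Fin 2 → ℝ => 2 * M ^ 3) Ω := hint _ (by fun_prop)
  set lam := (2 + G) ^ 6 with hlam
  have hl : 0 < lam := by positivity
  have ia : IntegrableOn (fun x => 2 * R * M * (ρ x * v x ^ 2)) Ω := hi1.const_mul _
  have ib : IntegrableOn (fun x => lam * e x) Ω := hei.const_mul _
  have ic0 : IntegrableOn (fun x => 4 * v x ^ 6) Ω := hi6.const_mul _
  have ic1 : IntegrableOn (fun x => 4 * v x ^ 6 + 2 * M ^ 3) Ω := ic0.add hci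
  have ic : IntegrableOn (fun x => lam⁻¹ * (4 * v x ^ 6 + 2 * M ^ 3)) Ω := ic1.const_mul _
  have id0 : IntegrableOn (fun x => lam * e x + lam⁻¹ * (4 * v x ^ 6 + 2 * M ^ 3)) Ω := ib.add ic
  have id1 : IntegrableOn (fun x => R ^ 2 * (lam * e x + lam⁻¹ * (4 * v x ^ 6 + 2 * M ^ 3))) Ω :=
    id0.const_mul _
  have hmain : ∫ x in Ω, ρ x ^ 2 * v x ^ 4 ≤ ∫ x in Ω, (2 * R * M * (ρ x * v x ^ 2)
      + R ^ 2 * (lam * e x + lam⁻¹ * (4 * v x ^ 6 + 2 * M ^ 3))) := by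
    refine setIntegral_mono_on hi2 (ia.add id1) hΩm fun x hx => ?_
    obtain ⟨p1, p2⟩ := pointwise v hv x δ D Gv hδ hδD (hv0 x hx) hGv hGl
    obtain ⟨h0, h1⟩ := hρb x hx
    have := pw_alg (ρ x) (v x ^ 2) (e x) M lam R h0 h1 (sq_nonneg _) (he0 x) hM hl
      (p1.trans (by gcongr)) (p2.trans (by gcongr))
    calc ρ x ^ 2 * v x ^ 4 = ρ x ^ 2 * (v x ^ 2) ^ 2 := by ring
      _ ≤ _ := this
      _ = _ := by ring
  rw [integral_add ia id1, integral_const_mul, integral_const_mul, integral_add ib ic,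
    integral_const_mul, integral_const_mul, integral_add ic0 hci, integral_const_mul,
    setIntegral_const] at hmain
  have hVr : volume.real Ω = V := rfl
  rw [hVr, smul_eq_mul] at hmain
  refine hmain.trans (le_trans ?_ (final_alg R A G L K C6 V hR hA hG0 hL hL2 hK0 C6.2 hV0))
  have hee' : ∫ x in Ω, e x ≤ 2 * δ ^ 2 * G := hee.trans (by gcongr)
  have hli : 0 ≤ lam⁻¹ := by positivity
  rw [mul_comm V]
  gcongr

/-- Desjardins' interpolation inequality: on a bounded smooth planar domain, for
`0 ≤ ρ ≤ Rbar` and `u ∈ H₀¹(Ω;ℝ²)` (represented by a C¹ field compactly supported in `Ω`),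
`‖√ρ u‖²_{L⁴} ≤ C(Rbar,Ω) (1 + ‖√ρ u‖_{L²}) ‖∇u‖_{L²} √(log(2 + ‖∇u‖²_{L²}))`. -/
theorem desjardins_interpolation
    (Ω : Set (Fin 2 → ℝ)) (hΩopen : IsOpen Ω) (hΩne : Ω.Nonempty)
    (hΩbdd : Bornology.IsBounded Ω) (Rbar : ℝ) (hRbar : 0 ≤ Rbar) :
    ∃ C > 0, ∀ (ρ : (Fin 2 → ℝ) → ℝ) (u : (Fin 2 → ℝ) → Fin 2 → ℝ),
      Measurable ρ → (∀ x ∈ Ω, 0 ≤ ρ x ∧ ρ x ≤ Rbar) →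
      ContDiff ℝ 1 u → HasCompactSupport u → tsupport u ⊆ Ω →
      (∫ x in Ω, ρ x ^ 2 * (∑ i, u x i ^ 2) ^ 2) ^ (1/2 : ℝ)
        ≤ C * (1 + (∫ x in Ω, ρ x * ∑ i, u x i ^ 2) ^ (1/2 : ℝ))
            * (∫ x in Ω, ∑ i, ∑ j, (pd (fun y => u y j) i x) ^ 2) ^ (1/2 : ℝ)
            * Real.sqrt (Real.log (2 + ∫ x in Ω, ∑ i, ∑ j, (pd (fun y => u y j) i x) ^ 2)) := by
  obtain ⟨C, hC, hS⟩ := scalar_est Ω hΩopen hΩbdd Rbar hRbar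
  refine ⟨Real.sqrt (4 * C), by positivity, fun ρ u hρ hρb hu hc hs => ?_⟩
  have hΩm := hΩopen.measurableSet
  have hv : ∀ j, ContDiff ℝ 1 (fun y => u y j) := fun j => contDiff_pi.1 hu j
  have hsub : ∀ j, tsupport (fun y => u y j) ⊆ tsupport u := fun j => by
    apply closure_mono
    intro y hy h
    exact hy (by simp [h])
  have hcj : ∀ j, HasCompactSupport (fun y => u y j) := fun j =>
    hc.of_isClosed_subset (isClosed_tsupport _) (hsub j)
  have hsj : ∀ j, tsupport (fun y => u y j) ⊆ Ω := fun j => (hsub j).trans hs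
  set G := ∫ x in Ω, ∑ i, ∑ j, (pd (fun y => u y j) i x) ^ 2 with hGdef
  have hgi : ∀ j, IntegrableOn (fun x => ∑ i, pd (fun y => u y j) i x ^ 2) Ω := fun j =>
    (g_lintegral Ω _ (hv j) (hcj j) (hsj j)).1.integrableOn
  have hGeq : G = ∑ j, ∫ x in Ω, ∑ i, pd (fun y => u y j) i x ^ 2 := by
    rw [← integral_finsetSum _ (fun j _ => hgi j), hGdef]
    congr 1; ext x; exact Finset.sum_comm
  have hg0 : ∀ j, 0 ≤ ∫ x in Ω, ∑ i, pd (fun y => u y j) i x ^ 2 := fun j =>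
    setIntegral_nonneg hΩm fun x _ => Finset.sum_nonneg fun i _ => sq_nonneg _
  have hgG : ∀ j, ∫ x in Ω, ∑ i, pd (fun y => u y j) i x ^ 2 ≤ G := fun j => by
    rw [hGeq]
    exact Finset.single_le_sum (f := fun j => ∫ x in Ω, ∑ i, pd (fun y => u y j) i x ^ 2)
      (fun j _ => hg0 j) (Finset.mem_univ j)
  have hG0 : 0 ≤ G := (hg0 0).trans (hgG 0)
  have h := fun j => hS ρ (fun y => u y j) hρ hρb (hv j) (hcj j) (hsj j) G (hgG j)
  set L := Real.log (2 + G) with hLdef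
  have hL0 : 0 ≤ L := Real.log_nonneg (by linarith)
  set A := ∫ x in Ω, ρ x * ∑ i, u x i ^ 2 with hAdef
  have hAeq : A = ∑ j, ∫ x in Ω, ρ x * u x j ^ 2 := by
    rw [← integral_finsetSum _ (fun j _ => (h j).1), hAdef]
    congr 1; ext x; exact Finset.mul_sum _ _ _
  have hA0 : ∀ j, 0 ≤ ∫ x in Ω, ρ x * u x j ^ 2 := fun j =>
    setIntegral_nonneg hΩm fun x hx => mul_nonneg (hρb x hx).1 (sq_nonneg _)
  rw [Fin.sum_univ_two] at hAeq
  have hA : 0 ≤ A := by linarith [hA0 0, hA0 1]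
  have hX : ∫ x in Ω, ρ x ^ 2 * (∑ i, u x i ^ 2) ^ 2 ≤ 4 * C * (1 + A) * G * L := by
    have i0 : IntegrableOn (fun x => 2 * (ρ x ^ 2 * u x 0 ^ 4)) Ω := (h 0).2.1.const_mul 2
    have i1 : IntegrableOn (fun x => 2 * (ρ x ^ 2 * u x 1 ^ 4)) Ω := (h 1).2.1.const_mul 2
    have h1 : ∫ x in Ω, ρ x ^ 2 * (∑ i, u x i ^ 2) ^ 2
        ≤ ∫ x in Ω, (2 * (ρ x ^ 2 * u x 0 ^ 4) + 2 * (ρ x ^ 2 * u x 1 ^ 4)) := by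
      refine integral_mono_of_nonneg (Filter.Eventually.of_forall fun x => by positivity)
        (i0.add i1) (Filter.Eventually.of_forall fun x => ?_)
      simp only [Fin.sum_univ_two]
      have : (u x 0 ^ 2 + u x 1 ^ 2) ^ 2 ≤ 2 * (u x 0 ^ 4 + u x 1 ^ 4) := by
        nlinarith [sq_nonneg (u x 0 ^ 2 - u x 1 ^ 2)]
      nlinarith [mul_le_mul_of_nonneg_left this (sq_nonneg (ρ x))]
    rw [integral_add i0 i1, integral_const_mul, integral_const_mul] at h1
    have b0 := (h 0).2.2
    have b1 := (h 1).2.2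
    have q : 0 ≤ C * G * L := by positivity
    have t : (C * G * L) * (1 + ∫ x in Ω, ρ x * u x 0 ^ 2)
        + (C * G * L) * (1 + ∫ x in Ω, ρ x * u x 1 ^ 2) ≤ 2 * ((C * G * L) * (1 + A)) := by
      rw [hAeq]
      nlinarith [mul_nonneg q (hA0 0), mul_nonneg q (hA0 1)]
    nlinarith
  rw [← Real.sqrt_eq_rpow, ← Real.sqrt_eq_rpow, ← Real.sqrt_eq_rpow]
  apply Real.sqrt_le_iff.2
  refine ⟨by positivity, hX.trans ?_⟩
  rw [mul_pow, mul_pow, mul_pow, Real.sq_sqrt (by positivity), Real.sq_sqrt hG0, Real.sq_sqrt hL0]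
  have : 1 + A ≤ (1 + Real.sqrt A) ^ 2 := by
    nlinarith [Real.sq_sqrt hA, Real.sqrt_nonneg A]
  gcongr
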